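/- arXiv:1706.00645 — 2 statements merged into one kernel-verified Lean document; each statement's English description precedes it below -/
import Mathlib

section
/- Assume Hypothesis (H). Then for every ε > 0, the operator P_ε := π_N M π_N + ε⁻¹ A, with domain dom(A), is boundedly invertible, and its inverse satisfies the identities π_R P_ε⁻¹ = ε ι_R (ι_R* A ι_R)⁻¹ ι_R* and π_N P_ε⁻¹ = ι_N B_{ε,N}⁻¹ ι_N*; consequently ‖P_ε⁻¹‖ ≤ max{1/c, ε C_R}. -/
/-!
Since `A` is reduced by `N ⊕ Nᗮ`, so is `P_ε = π_N M π_N + ε⁻¹ A`, and its two compressions are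
`B_{ε,N}` and `ε⁻¹ ι_R* A ι_R`. The second is invertible by hypothesis, with inverse
`ε (ι_R* A ι_R)⁻¹`. The first is coercive because `M` is and `A` is accretive on `N`; being defined
on all of `N` it is automatically bounded, hence invertible with an inverse of norm at most `1 / c`.
The inverse of `P_ε` is the block diagonal operator with these two inverses as entries.
-/

noncomputable section

open Submodule RCLike Filter Topology
open scoped InnerProductSpace

section BoundedInverse

variable {𝕜 E F : Type*} [NormedField 𝕜]
  [NormedAddCommGroup E] [NormedSpace 𝕜 E] [NormedAddCommGroup F] [NormedSpace 𝕜 F]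

/-- `S` is the everywhere defined bounded inverse of the possibly unbounded operator `P`. -/
structure IsBoundedInverse (P : E →ₗ.[𝕜] F) (S : F →L[𝕜] E) : Prop where
  left_inv : ∀ x : P.domain, S (P x) = x
  surjective : ∀ y, ∃ x : P.domain, P x = y

theorem IsBoundedInverse.apply_eq_of_leftInverse {P : E →ₗ.[𝕜] F} {S : F →L[𝕜] E}
    (hS : IsBoundedInverse P S) {T : F → E} (hT : ∀ x : P.domain, T (P x) = x) (y : F) :
    S y = T y := by
  obtain ⟨x, rfl⟩ := hS.surjective y
  rw [hS.left_inv, hT]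

theorem IsBoundedInverse.smul {P : E →ₗ.[𝕜] F} {S : F →L[𝕜] E} (hS : IsBoundedInverse P S)
    {a : 𝕜} (ha : a ≠ 0) : IsBoundedInverse (a • P) (a⁻¹ • S) where
  left_inv x := by
    rw [LinearPMap.smul_apply, smul_apply, map_smul, hS.left_inv, inv_smul_smul₀ ha]
  surjective y := by
    obtain ⟨x, hx⟩ := hS.surjective (a⁻¹ • y)
    exact ⟨x, by rw [LinearPMap.smul_apply, hx, smul_inv_smul₀ ha]⟩

end BoundedInverse

variable {𝕜 E : Type*} [RCLike 𝕜] [NormedAddCommGroup E] [InnerProductSpace 𝕜 E]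

theorem continuous_of_accretive [CompleteSpace E] (T : E →ₗ[𝕜] E)
    (hT : ∀ x, 0 ≤ re ⟪T x, x⟫_𝕜) : Continuous T := by
  refine T.continuous_of_seq_closed_graph fun u x y hu hTu => ?_
  have limit_nonneg (z : E) : 0 ≤ re ⟪y - T z, x - z⟫_𝕜 := by
    refine ge_of_tendsto' ((continuous_re.tendsto _).comp
      ((hTu.sub_const (T z)).inner (hu.sub_const z))) fun n => ?_
    simpa only [Function.comp_apply, map_sub] using hT (u n - z)
  set d := y - T x with hd
  -- Minty's trick: test the limit inequality at `z = x + t d` and let `t → 0⁺`.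
  have norm_sq_le (t : ℝ) (ht : 0 < t) : ‖d‖ ^ 2 ≤ t * re ⟪T d, d⟫_𝕜 := by
    have h := limit_nonneg (x + (t : 𝕜) • d)
    rw [map_add, map_smul, ← sub_sub, ← hd, sub_add_cancel_left, inner_neg_right,
      inner_smul_right, inner_sub_left, inner_smul_left, conj_ofReal, map_neg, re_ofReal_mul,
      map_sub, re_ofReal_mul, inner_self_eq_norm_sq] at h
    nlinarith
  have tendsto_zero : Tendsto (fun t : ℝ => t * re ⟪T d, d⟫_𝕜) (𝓝[>] 0) (𝓝 0) := by
    simpa only [zero_mul, id] using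
      (tendsto_id (x := 𝓝 (0 : ℝ))).mono_left nhdsWithin_le_nhds |>.mul_const (re ⟪T d, d⟫_𝕜)
  have norm_sq_nonpos : ‖d‖ ^ 2 ≤ 0 :=
    ge_of_tendsto tendsto_zero (eventually_mem_nhdsWithin.mono norm_sq_le)
  exact sub_eq_zero.1 (norm_eq_zero.1 (pow_eq_zero_iff two_ne_zero |>.1
    (norm_sq_nonpos.antisymm (sq_nonneg _))))

theorem mul_norm_le_norm_of_coercive {P : E →ₗ.[𝕜] E} {c : ℝ}
    (hP : ∀ x : P.domain, c * ‖(x : E)‖ ^ 2 ≤ re ⟪P x, x⟫_𝕜) (x : P.domain) :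
    c * ‖(x : E)‖ ≤ ‖P x‖ := by
  rcases (norm_nonneg (x : E)).eq_or_lt with hx | hx
  · rw [← hx, mul_zero]
    exact norm_nonneg _
  · refine le_of_mul_le_mul_right ?_ hx
    calc c * ‖(x : E)‖ * ‖(x : E)‖ = c * ‖(x : E)‖ ^ 2 := by ring
      _ ≤ re ⟪P x, x⟫_𝕜 := hP x
      _ ≤ ‖P x‖ * ‖(x : E)‖ := re_inner_le_norm _ _

theorem IsBoundedInverse.opNorm_le_of_coercive {P : E →ₗ.[𝕜] E} {S : E →L[𝕜] E}
    (hS : IsBoundedInverse P S) {c : ℝ} (hc : 0 < c)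
    (hP : ∀ x : P.domain, c * ‖(x : E)‖ ^ 2 ≤ re ⟪P x, x⟫_𝕜) : ‖S‖ ≤ 1 / c := by
  refine S.opNorm_le_bound (by positivity) fun y => ?_
  obtain ⟨x, rfl⟩ := hS.surjective y
  rw [hS.left_inv, one_div, inv_mul_eq_div, le_div_iff₀' hc]
  exact mul_norm_le_norm_of_coercive hP x

theorem exists_isBoundedInverse_of_coercive [CompleteSpace E] {P : E →ₗ.[𝕜] E}
    (hdom : P.domain = ⊤) {c : ℝ} (hc : 0 < c)
    (hP : ∀ x : P.domain, c * ‖(x : E)‖ ^ 2 ≤ re ⟪P x, x⟫_𝕜) :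
    ∃ S : E →L[𝕜] E, IsBoundedInverse P S := by
  obtain ⟨_, T⟩ := P
  obtain rfl := hdom
  let B₀ : E →ₗ[𝕜] E := T ∘ₗ Submodule.topEquiv.symm.toLinearMap
  have coercive (x : E) : c * ‖x‖ ^ 2 ≤ re ⟪B₀ x, x⟫_𝕜 := hP ⟨x, mem_top⟩
  let B : E →L[𝕜] E :=
    ⟨B₀, continuous_of_accretive B₀ fun x => le_trans (by positivity) (coercive x)⟩
  obtain ⟨u, hu⟩ : IsUnit B :=
    B.isUnit_of_forall_le_norm_inner_map (c := ⟨c, hc.le⟩) hc fun x => by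
      rw [mul_comm]
      exact (coercive x).trans (re_le_norm _)
  refine ⟨↑u⁻¹, fun x => ?_, fun y => ⟨⟨(↑u⁻¹ : E →L[𝕜] E) y, mem_top⟩, ?_⟩⟩
  · exact DFunLike.congr_fun (hu ▸ u.inv_mul : ↑u⁻¹ * B = 1) (x : E)
  · exact DFunLike.congr_fun (hu ▸ u.mul_inv : B * ↑u⁻¹ = 1) y

theorem re_inner_apply_self_eq_zero_of_adjoint_eq_neg [CompleteSpace E] {A : E →ₗ.[𝕜] E}
    (hdense : Dense (A.domain : Set E)) (hskew : A.adjoint = -A) (x : A.domain) :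
    re ⟪A x, x⟫_𝕜 = 0 := by
  have formalAdjoint := A.adjoint_isFormalAdjoint hdense
  rw [hskew] at formalAdjoint
  have inner_neg : ⟪-(A x), (x : E)⟫_𝕜 = ⟪(x : E), A x⟫_𝕜 := formalAdjoint x x
  have re_neg := congrArg re inner_neg
  rw [inner_neg_left, map_neg, inner_re_symm (x : E)] at re_neg
  linarith

/-- The bounded operator `ι_K S ι_K* + ι_{Kᗮ} T ι_{Kᗮ}*` acting as `S` on `K` and as `T` on `Kᗮ`. -/
def blockDiag (K : Submodule 𝕜 E) [K.HasOrthogonalProjection] (S : K →L[𝕜] K) (T : Kᗮ →L[𝕜] Kᗮ) :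
    E →L[𝕜] E :=
  K.subtypeL ∘L S ∘L K.orthogonalProjectionOnto + Kᗮ.subtypeL ∘L T ∘L Kᗮ.orthogonalProjectionOnto

section BlockDiag

variable {K : Submodule 𝕜 E} [K.HasOrthogonalProjection] {S : K →L[𝕜] K} {T : Kᗮ →L[𝕜] Kᗮ}

theorem blockDiag_apply (y : E) : blockDiag K S T y =
    S (K.orthogonalProjectionOnto y) + T (Kᗮ.orthogonalProjectionOnto y) := rfl

theorem orthogonalProjectionOnto_blockDiag (y : E) :
    K.orthogonalProjectionOnto (blockDiag K S T y) = S (K.orthogonalProjectionOnto y) := by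
  rw [blockDiag_apply, map_add, orthogonalProjectionOnto_mem_subspace_eq_self,
    orthogonalProjectionOnto_apply_of_mem_orthogonal (coe_mem _), add_zero]

theorem orthogonalProjectionOnto_orthogonal_blockDiag (y : E) :
    Kᗮ.orthogonalProjectionOnto (blockDiag K S T y) = T (Kᗮ.orthogonalProjectionOnto y) := by
  rw [blockDiag_apply, map_add, orthogonalProjectionOnto_mem_subspace_eq_self,
    orthogonalProjectionOnto_orthogonal_apply_eq_zero (coe_mem _), zero_add]

theorem opNorm_blockDiag_le : ‖blockDiag K S T‖ ≤ max ‖S‖ ‖T‖ := by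
  have hm : 0 ≤ max ‖S‖ ‖T‖ := (norm_nonneg S).trans (le_max_left _ _)
  refine ContinuousLinearMap.opNorm_le_bound _ hm fun y => ?_
  have hS : ‖S (K.orthogonalProjectionOnto y)‖ ≤ max ‖S‖ ‖T‖ * ‖K.orthogonalProjectionOnto y‖ :=
    S.le_of_opNorm_le (le_max_left _ _) _
  have hT : ‖T (Kᗮ.orthogonalProjectionOnto y)‖ ≤
      max ‖S‖ ‖T‖ * ‖Kᗮ.orthogonalProjectionOnto y‖ :=
    T.le_of_opNorm_le (le_max_right _ _) _
  refine (sq_le_sq₀ (norm_nonneg _) (by positivity)).1 ?_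
  rw [mul_pow, norm_sq_eq_add_norm_sq_projection (blockDiag K S T y) K,
    norm_sq_eq_add_norm_sq_projection y K, orthogonalProjectionOnto_blockDiag,
    orthogonalProjectionOnto_orthogonal_blockDiag, mul_add, ← mul_pow, ← mul_pow]
  gcongr

end BlockDiag

/-- The operator `P` is reduced by the subspace `K`, i.e. `π_K P ⊆ P π_K`. -/
def IsReducedBy (P : E →ₗ.[𝕜] E) (K : Submodule 𝕜 E) [K.HasOrthogonalProjection] : Prop :=
  ∀ x : P.domain, ∃ hx : K.starProjection x ∈ P.domain,
    K.starProjection (P x) = P ⟨K.starProjection x, hx⟩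

/-- The compression `ι_K* P ι_K` of `P` to the subspace `K`, with domain `dom P ∩ K`. -/
def compression (P : E →ₗ.[𝕜] E) (K : Submodule 𝕜 E) [K.HasOrthogonalProjection] :
    K →ₗ.[𝕜] K where
  domain := P.domain.comap K.subtype
  toFun := K.orthogonalProjectionOnto.toLinearMap ∘ₗ P.toFun ∘ₗ
    K.subtype.restrict (p := P.domain.comap K.subtype) fun _ hx => hx

/-- The operator `π_K M π_K + A` with domain `dom A`. The operator `P_ε` is obtained for `K = N` and
`ε⁻¹ A` in place of `A`. -/
def addCompression (A : E →ₗ.[𝕜] E) (M : E →ₗ[𝕜] E) (K : Submodule 𝕜 E)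
    [K.HasOrthogonalProjection] : E →ₗ.[𝕜] E :=
  (K.starProjection.toLinearMap ∘ₗ M ∘ₗ K.starProjection.toLinearMap) +ᵥ A

section Reduction

variable {P A : E →ₗ.[𝕜] E} {K : Submodule 𝕜 E} [K.HasOrthogonalProjection]

theorem compression_apply (x : (compression P K).domain) :
    compression P K x = K.orthogonalProjectionOnto (P ⟨x, x.2⟩) := rfl

theorem isBoundedInverse_compression {J : K →L[𝕜] K}
    (hleft : ∀ (x : P.domain) (hx : (x : E) ∈ K),
      J (K.orthogonalProjectionOnto (P x)) = ⟨(x : E), hx⟩)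
    (hsurj : ∀ y : K, ∃ (x : P.domain) (_ : (x : E) ∈ K), K.orthogonalProjectionOnto (P x) = y) :
    IsBoundedInverse (compression P K) J where
  left_inv x := hleft ⟨x, x.2⟩ (coe_mem _)
  surjective y := by
    obtain ⟨x, hx, hxy⟩ := hsurj y
    exact ⟨⟨⟨x, hx⟩, x.2⟩, hxy⟩

theorem compression_smul (a : 𝕜) : compression (a • P) K = a • compression P K :=
  LinearPMap.ext rfl fun x _ _ => map_smul K.orthogonalProjectionOnto a (P ⟨x, _⟩)

theorem IsReducedBy.smul (hP : IsReducedBy P K) (a : 𝕜) : IsReducedBy (a • P) K := fun x => by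
  obtain ⟨hx, hPx⟩ := hP x
  exact ⟨hx, by rw [LinearPMap.smul_apply, map_smul, hPx, LinearPMap.smul_apply]⟩

theorem isReducedBy_orthogonal_iff : IsReducedBy P Kᗮ ↔ IsReducedBy P K := by
  refine forall_congr' fun x => ?_
  simp only [starProjection_orthogonal_val]
  constructor
  · rintro ⟨hx, hPx⟩
    have h : K.starProjection (x : E) ∈ P.domain := by
      simpa only [sub_sub_cancel] using P.domain.sub_mem x.2 hx
    refine ⟨h, ?_⟩
    rw [← sub_sub_cancel (P x) (K.starProjection (P x)), hPx, ← P.map_sub]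
    exact congrArg P (Subtype.ext (sub_sub_cancel _ _))
  · rintro ⟨hx, hPx⟩
    refine ⟨P.domain.sub_mem x.2 hx, ?_⟩
    rw [hPx, ← P.map_sub]
    rfl

theorem IsReducedBy.orthogonalProjectionOnto_apply (hP : IsReducedBy P K) (x : P.domain) :
    ∃ hx, K.orthogonalProjectionOnto (P x) =
      compression P K ⟨K.orthogonalProjectionOnto (x : E), hx⟩ := by
  obtain ⟨hx, hPx⟩ := hP x
  refine ⟨hx, ?_⟩
  rw [compression_apply, ← orthogonalProjectionOnto_mem_subspace_eq_self
    (K.orthogonalProjectionOnto (P x))]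
  exact congrArg K.orthogonalProjectionOnto hPx

theorem IsReducedBy.coe_compression_apply (hP : IsReducedBy P K) (x : (compression P K).domain) :
    (compression P K x : E) = P ⟨x, x.2⟩ := by
  obtain ⟨hx, hPx⟩ := hP ⟨x, x.2⟩
  refine hPx.trans (congrArg P (Subtype.ext ?_))
  exact starProjection_mem_subspace_eq_self (x : K)

theorem IsReducedBy.isBoundedInverse_blockDiag (hP : IsReducedBy P K)
    {S : K →L[𝕜] K} (hS : IsBoundedInverse (compression P K) S)
    {T : Kᗮ →L[𝕜] Kᗮ} (hT : IsBoundedInverse (compression P Kᗮ) T) :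
    IsBoundedInverse P (blockDiag K S T) where
  left_inv x := by
    obtain ⟨hx, hPx⟩ := hP.orthogonalProjectionOnto_apply x
    obtain ⟨hx', hPx'⟩ := (isReducedBy_orthogonal_iff.2 hP).orthogonalProjectionOnto_apply x
    rw [blockDiag_apply, hPx, hPx', hS.left_inv, hT.left_inv]
    exact K.starProjection_add_starProjection_orthogonal (x : E)
  surjective y := by
    obtain ⟨a, ha⟩ := hS.surjective (K.orthogonalProjectionOnto y)
    obtain ⟨b, hb⟩ := hT.surjective (Kᗮ.orthogonalProjectionOnto y)
    refine ⟨⟨a, a.2⟩ + ⟨b, b.2⟩, ?_⟩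
    rw [P.map_add, ← hP.coe_compression_apply,
      ← (isReducedBy_orthogonal_iff.2 hP).coe_compression_apply, ha, hb]
    exact K.starProjection_add_starProjection_orthogonal y

variable {M : E →ₗ[𝕜] E}

theorem addCompression_apply (x : (addCompression A M K).domain) :
    addCompression A M K x = K.starProjection (M (K.starProjection x)) + A ⟨x, x.2⟩ := rfl

theorem IsReducedBy.addCompression (hA : IsReducedBy A K) (M : E →ₗ[𝕜] E) :
    IsReducedBy (addCompression A M K) K := fun x => by
  obtain ⟨hx, hAx⟩ := hA ⟨x, x.2⟩
  have idempotent (y : E) : K.starProjection (K.starProjection y) = K.starProjection y :=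
    starProjection_eq_self_iff.2 (starProjection_apply_mem K y)
  refine ⟨hx, ?_⟩
  rw [addCompression_apply, addCompression_apply, map_add, hAx, idempotent, idempotent]

theorem compression_addCompression_apply (x : (compression (addCompression A M K) K).domain) :
    compression (addCompression A M K) K x =
      K.orthogonalProjectionOnto (M x) + K.orthogonalProjectionOnto (A ⟨x, x.2⟩) := by
  rw [compression_apply, addCompression_apply, map_add, starProjection_apply,
    orthogonalProjectionOnto_mem_subspace_eq_self, starProjection_mem_subspace_eq_self]

theorem compression_addCompression_orthogonal :
    compression (addCompression A M K) Kᗮ = compression A Kᗮ :=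
  LinearPMap.ext rfl fun x _ _ => by
    rw [compression_apply, addCompression_apply, map_add,
      orthogonalProjectionOnto_orthogonal_apply_eq_zero (starProjection_apply_mem K _), zero_add]
    rfl

theorem coercive_compression_addCompression {c : ℝ}
    (hM : ∀ x ∈ K, c * ‖x‖ ^ 2 ≤ re ⟪M x, x⟫_𝕜)
    (hA : ∀ x : A.domain, (x : E) ∈ K → 0 ≤ re ⟪A x, x⟫_𝕜)
    (x : (compression (addCompression A M K) K).domain) :
    c * ‖(x : K)‖ ^ 2 ≤ re ⟪compression (addCompression A M K) K x, (x : K)⟫_𝕜 := by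
  rw [compression_addCompression_apply, inner_add_left,
    inner_orthogonalProjectionOnto_eq_of_mem_right, inner_orthogonalProjectionOnto_eq_of_mem_right,
    map_add]
  exact le_add_of_le_of_nonneg (hM x (coe_mem _)) (hA ⟨x, x.2⟩ (coe_mem _))

end Reduction

theorem exists_isBoundedInverse_addCompression {N : Submodule 𝕜 E} [CompleteSpace N]
    {A : E →ₗ.[𝕜] E} {M : E →ₗ[𝕜] E} {c : ℝ} (hc : 0 < c)
    (hM : ∀ x ∈ N, c * ‖x‖ ^ 2 ≤ re ⟪M x, x⟫_𝕜)
    (hA : ∀ x : A.domain, (x : E) ∈ N → 0 ≤ re ⟪A x, x⟫_𝕜)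
    (hN : N ≤ A.domain) (hred : IsReducedBy A N)
    {J : Nᗮ →L[𝕜] Nᗮ} (hJ : IsBoundedInverse (compression A Nᗮ) J) :
    ∃ G : N →L[𝕜] N, ‖G‖ ≤ 1 / c ∧ IsBoundedInverse (compression (addCompression A M N) N) G ∧
      IsBoundedInverse (addCompression A M N) (blockDiag N G J) := by
  have coercive := coercive_compression_addCompression hM hA
  obtain ⟨G, hG⟩ := exists_isBoundedInverse_of_coercive
    (P := compression (addCompression A M N) N) (comap_subtype_eq_top.2 hN) hc coercive
  refine ⟨G, hG.opNorm_le_of_coercive hc coercive, hG,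
    (hred.addCompression M).isBoundedInverse_blockDiag hG ?_⟩
  rwa [compression_addCompression_orthogonal]

theorem statement10_general {M : E →ₗ[𝕜] E} {c : ℝ} (hc : 0 < c) {A : E →ₗ.[𝕜] E}
    {N : Submodule 𝕜 E} [CompleteSpace N] (hN : N ≤ A.domain)
    (hM : ∀ x ∈ N, c * ‖x‖ ^ 2 ≤ re ⟪M x, x⟫_𝕜)
    (hA : ∀ x : A.domain, (x : E) ∈ N → 0 ≤ re ⟪A x, x⟫_𝕜)
    (hred : IsReducedBy A Nᗮ) {C_R : ℝ}
    (hinv : ∃ J : Nᗮ →L[𝕜] Nᗮ, ‖J‖ ≤ C_R ∧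
      (∀ (x : A.domain) (hx : (x : E) ∈ Nᗮ),
        J (Nᗮ.orthogonalProjectionOnto (A x)) = ⟨(x : E), hx⟩) ∧
      (∀ y : Nᗮ, ∃ (x : A.domain) (_ : (x : E) ∈ Nᗮ), Nᗮ.orthogonalProjectionOnto (A x) = y))
    {ε : ℝ} (hε : 0 < ε) :
    ∃ Pinv : E →L[𝕜] E,
      (∀ x : A.domain, Pinv (N.orthogonalProjectionOnto (M (N.orthogonalProjectionOnto (x : E))) +
        ((ε⁻¹ : ℝ) : 𝕜) • A x) = x) ∧
      (∀ y : E, ∃ x : A.domain,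
        N.orthogonalProjectionOnto (M (N.orthogonalProjectionOnto (x : E))) +
          ((ε⁻¹ : ℝ) : 𝕜) • A x = y) ∧
      (∀ J : Nᗮ →L[𝕜] Nᗮ,
        (∀ (x : A.domain) (hx : (x : E) ∈ Nᗮ),
          J (Nᗮ.orthogonalProjectionOnto (A x)) = ⟨(x : E), hx⟩) →
        ∀ y : E, (Nᗮ.orthogonalProjectionOnto (Pinv y) : E) =
          (ε : 𝕜) • (J (Nᗮ.orthogonalProjectionOnto y) : E)) ∧
      (∀ JN : N →L[𝕜] N,
        (∀ x : N, JN (N.orthogonalProjectionOnto (M x) +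
          ((ε⁻¹ : ℝ) : 𝕜) • N.orthogonalProjectionOnto (A ⟨(x : E), hN x.2⟩)) = x) →
        ∀ y : E, (N.orthogonalProjectionOnto (Pinv y) : E) =
          (JN (N.orthogonalProjectionOnto y) : E)) ∧
      ‖Pinv‖ ≤ max (1 / c) (ε * C_R) := by
  obtain ⟨J, hJ_norm, hJ_left, hJ_surj⟩ := hinv
  have hJ := isBoundedInverse_compression hJ_left hJ_surj
  have hεJ : IsBoundedInverse (compression (((ε⁻¹ : ℝ) : 𝕜) • A) Nᗮ) ((ε : 𝕜) • J) := by
    rw [compression_smul, ofReal_inv]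
    simpa only [inv_inv] using hJ.smul (inv_ne_zero (ofReal_ne_zero.2 hε.ne'))
  have hεA (x : A.domain) (hx : (x : E) ∈ N) : 0 ≤ re ⟪((ε⁻¹ : ℝ) : 𝕜) • A x, x⟫_𝕜 := by
    rw [inner_smul_left, conj_ofReal, re_ofReal_mul]
    exact mul_nonneg (inv_nonneg.2 hε.le) (hA x hx)
  obtain ⟨G, hG_norm, hG, hP⟩ := exists_isBoundedInverse_addCompression
    (A := ((ε⁻¹ : ℝ) : 𝕜) • A) hc hM hεA hN ((isReducedBy_orthogonal_iff.1 hred).smul _) hεJ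
  refine ⟨blockDiag N G ((ε : 𝕜) • J), hP.left_inv, hP.surjective, fun J' hJ' y => ?_,
    fun JN hJN y => ?_, ?_⟩
  · rw [orthogonalProjectionOnto_orthogonal_blockDiag, smul_apply, coe_smul,
      hJ.apply_eq_of_leftInverse fun x => hJ' ⟨x, x.2⟩ (coe_mem _)]
  · rw [orthogonalProjectionOnto_blockDiag, hG.apply_eq_of_leftInverse fun x => ?_]
    rw [compression_addCompression_apply, LinearPMap.smul_apply, map_smul]
    exact hJN x
  · refine opNorm_blockDiag_le.trans (max_le_max hG_norm ?_)
    rw [norm_smul, norm_of_nonneg hε.le]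
    gcongr

end

/-- Under Hypothesis (H), for every `ε > 0` the operator
`P_ε = π_N M π_N + ε⁻¹ A` (domain `dom A`) is boundedly invertible, its inverse satisfies
`π_R P_ε⁻¹ = ε ι_R (ι_R* A ι_R)⁻¹ ι_R*` and `π_N P_ε⁻¹ = ι_N B_{ε,N}⁻¹ ι_N*`, and
`‖P_ε⁻¹‖ ≤ max{1/c, ε C_R}`. -/
theorem statement10
    {H : Type*} [NormedAddCommGroup H] [InnerProductSpace ℂ H] [CompleteSpace H]
    -- `M` is a bounded operator with `Re⟪M x, x⟫ ≥ c ‖x‖²`, `c > 0`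
    (M : H →L[ℂ] H) (c : ℝ) (hc : 0 < c)
    (hM : ∀ x : H, c * ‖x‖ ^ 2 ≤ (inner ℂ (M x) x : ℂ).re)
    -- `A` is densely defined and skew-selfadjoint
    (A : H →ₗ.[ℂ] H) (hA_dense : Dense (A.domain : Set H)) (hA_skew : A.adjoint = -A)
    -- `N` is a closed subspace, `R = Nᗮ`
    (N : Submodule ℂ H) [CompleteSpace N]
    (C_R : ℝ) (hC_R : 0 < C_R)
    -- Hypothesis (H)(a): `N ⊆ dom A` and `A π_N` is bounded
    (hHa_sub : N ≤ A.domain)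
    (hHa_bdd : ∃ Ca : ℝ, ∀ x : A.domain, (x : H) ∈ N → ‖A x‖ ≤ Ca * ‖(x : H)‖)
    -- Hypothesis (H)(b): `π_R A ⊆ A π_R`
    (hHb : ∀ x : A.domain,
      ∃ hx : ((Submodule.orthogonalProjection Nᗮ (x : H) : H)) ∈ A.domain,
        (Submodule.orthogonalProjection Nᗮ (A x) : H)
          = A ⟨(Submodule.orthogonalProjection Nᗮ (x : H) : H), hx⟩)
    -- Hypothesis (H)(c): the compression `ι_R* A ι_R`, with domain `dom(A) ∩ R`, is a
    -- bijection onto `R` with bounded inverse of norm at most `C_R`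
    (hHc : ∃ J : Nᗮ →L[ℂ] Nᗮ, ‖J‖ ≤ C_R ∧
      (∀ (x : A.domain) (hx : (x : H) ∈ Nᗮ),
        J (Submodule.orthogonalProjection Nᗮ (A x)) = ⟨(x : H), hx⟩) ∧
      (∀ y : Nᗮ, ∃ (x : A.domain) (hx : (x : H) ∈ Nᗮ),
        Submodule.orthogonalProjection Nᗮ (A x) = y))
    (ε : ℝ) (hε : 0 < ε) :
    ∃ Pinv : H →L[ℂ] H,
      -- `Pinv` is the bounded inverse of `P_ε = π_N M π_N + ε⁻¹ A`
      (∀ x : A.domain,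
        Pinv ((Submodule.orthogonalProjection N (M ((Submodule.orthogonalProjection N (x : H) : H))) : H)
            + ε⁻¹ • A x) = x) ∧
      (∀ y : H, ∃ x : A.domain,
        (Submodule.orthogonalProjection N (M ((Submodule.orthogonalProjection N (x : H) : H))) : H)
            + ε⁻¹ • A x = y) ∧
      -- `π_R P_ε⁻¹ = ε ι_R (ι_R* A ι_R)⁻¹ ι_R*`, for the inverse `J` of the compression
      (∀ J : Nᗮ →L[ℂ] Nᗮ,
        ((∀ (x : A.domain) (hx : (x : H) ∈ Nᗮ),
            J (Submodule.orthogonalProjection Nᗮ (A x)) = ⟨(x : H), hx⟩) ∧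
          (∀ y : Nᗮ, ∃ (x : A.domain) (hx : (x : H) ∈ Nᗮ),
            Submodule.orthogonalProjection Nᗮ (A x) = y)) →
        ∀ y : H, (Submodule.orthogonalProjection Nᗮ (Pinv y) : H)
            = ε • (J (Submodule.orthogonalProjection Nᗮ y) : H)) ∧
      -- `π_N P_ε⁻¹ = ι_N B_{ε,N}⁻¹ ι_N*`, for the inverse `JN` of `B_{ε,N}`
      (∀ JN : N →L[ℂ] N,
        ((∀ x : N,
            JN (Submodule.orthogonalProjection N (M (x : H))
                + ε⁻¹ • Submodule.orthogonalProjection N (A ⟨(x : H), hHa_sub x.2⟩)) = x) ∧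
          (∀ y : N, ∃ x : N,
            Submodule.orthogonalProjection N (M (x : H))
                + ε⁻¹ • Submodule.orthogonalProjection N (A ⟨(x : H), hHa_sub x.2⟩) = y)) →
        ∀ y : H, (Submodule.orthogonalProjection N (Pinv y) : H)
            = (JN (Submodule.orthogonalProjection N y) : H)) ∧
      -- consequently `‖P_ε⁻¹‖ ≤ max{1/c, ε C_R}`
      ‖Pinv‖ ≤ max (1 / c) (ε * C_R) := by
  obtain ⟨S, hleft, hsurj, hR, hN, hnorm⟩ := statement10_general (M := M) hc hHa_sub
    (fun x _ => hM x)
    (fun x _ => (re_inner_apply_self_eq_zero_of_adjoint_eq_neg hA_dense hA_skew x).ge) hHb hHc hε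
  exact ⟨S, hleft, hsurj, fun J hJ => hR J hJ.1, fun JN hJN => hN JN hJN.1, hnorm⟩
end

section
/- (Stability of the limit fibre problem under perturbation of the coefficient.) Let n, d ≥ 1, ν > 0, κ₀ ≥ 0. Let a_θ, a₀ : ℂ^{n×d} → ℂ^{n×d} be linear maps with Re⟨a_θ X, X⟩ ≥ ν ‖X‖² and Re⟨a₀ X, X⟩ ≥ ν ‖X‖² for all X ∈ ℂ^{n×d}, and let m : ℂⁿ → ℂⁿ be a linear map with Re⟨m β, β⟩ ≥ ν ‖β‖² for all β ∈ ℂⁿ. Let θ ∈ ℝ^d, ε > 0, and assume ‖a₀ − a_θ‖ ≤ κ₀ |θ| (operator norm). Suppose β, β' ∈ ℂⁿ satisfy ε⁻² a_θ(β ⊗ θ) θ + m β = f and ε⁻² a₀(β' ⊗ θ) θ + m β' = f for some f ∈ ℂⁿ. Then ‖β − β'‖ ≤ C ε ‖f‖, where C = κ₀ · sup_{t ≥ 0} t³ / (ν² (1 + t²)²); in particular C depends only on κ₀ and ν. -/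
/-- The rank-one matrix `β ⊗ θ ∈ ℂ^{n×d}` with entries `β_i θ_j`. -/
noncomputable def tensorVec {n d : ℕ} (β : EuclideanSpace ℂ (Fin n))
    (θ : EuclideanSpace ℝ (Fin d)) : EuclideanSpace ℂ (Fin n × Fin d) :=
  (WithLp.equiv 2 _).symm fun p => β p.1 * ((θ p.2 : ℝ) : ℂ)

/-- The matrix-vector product `M θ ∈ ℂⁿ` for `M ∈ ℂ^{n×d}`, `θ ∈ ℝ^d`. -/
noncomputable def matVec {n d : ℕ} (M : EuclideanSpace ℂ (Fin n × Fin d))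
    (θ : EuclideanSpace ℝ (Fin d)) : EuclideanSpace ℂ (Fin n) :=
  (WithLp.equiv 2 _).symm fun i => ∑ j : Fin d, M (i, j) * ((θ j : ℝ) : ℂ)

/-!
The maps `β ↦ β ⊗ θ` and `M ↦ M θ` are adjoint to each other, and the former multiplies norms by
`|θ|`. With `t = |θ| / ε`, the operator `P a = ε⁻² (a (· ⊗ θ)) θ + m` therefore inherits from `a`
and `m` the coercivity constant `ν (1 + t²)`, and `‖P a₀ - P a_θ‖ ≤ κ₀ ε t³`. From
`P a_θ β = f = P a₀ β'` one gets the resolvent identity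
`β - β' = (P a_θ)⁻¹ (P a₀ - P a_θ) (P a₀)⁻¹ f`, whose two inverses cost `ν (1 + t²)` each.
-/

theorem bddAbove_range_pow_three_div (ν : ℝ) :
    BddAbove (Set.range fun t : Set.Ici (0 : ℝ) =>
      (t : ℝ) ^ 3 / (ν ^ 2 * (1 + (t : ℝ) ^ 2) ^ 2)) := by
  refine ⟨(ν ^ 2)⁻¹, Set.forall_mem_range.2 fun ⟨t, _⟩ => ?_⟩
  have pow_three_le : t ^ 3 ≤ (1 + t ^ 2) ^ 2 := by
    nlinarith [sq_nonneg (t ^ 2 - t / 2), sq_nonneg t]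
  rw [mul_comm, ← div_div, div_eq_mul_inv]
  exact mul_le_of_le_one_left (by positivity) (div_le_one_of_le₀ pow_three_le (by positivity))

section InnerProductSpace

variable {𝕜 E F : Type*} [RCLike 𝕜] [NormedAddCommGroup E] [InnerProductSpace 𝕜 E]
  [NormedAddCommGroup F] [InnerProductSpace 𝕜 F]

/-- Coercivity of a linear operator on a real or complex inner product space, with an explicit
constant: the numerical range of `A` lies in the half-plane `re z ≥ c`. -/
def IsCoerciveWith (c : ℝ) (A : E →ₗ[𝕜] E) : Prop :=
  ∀ x, c * ‖x‖ ^ 2 ≤ RCLike.re (inner 𝕜 (A x) x)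

/-- The operator `ε⁻² S a T + m` of the fibre problem, where `S` is thought of as the adjoint
of `T`. -/
noncomputable def fibreOperator (T : E →ₗ[𝕜] F) (S : F →ₗ[𝕜] E) (ε : ℝ) (m : E →ₗ[𝕜] E)
    (a : F →ₗ[𝕜] F) : E →ₗ[𝕜] E :=
  ((ε : 𝕜)⁻¹ ^ 2) • (S ∘ₗ a ∘ₗ T) + m

namespace IsCoerciveWith

variable {c c' : ℝ} {A B : E →ₗ[𝕜] E}

theorem add (hA : IsCoerciveWith c A) (hB : IsCoerciveWith c' B) :
    IsCoerciveWith (c + c') (A + B) := fun x => by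
  rw [LinearMap.add_apply, inner_add_left, map_add, add_mul]
  exact add_le_add (hA x) (hB x)

theorem ofReal_smul {r : ℝ} (hr : 0 ≤ r) (hA : IsCoerciveWith c A) :
    IsCoerciveWith (r * c) ((r : 𝕜) • A) := fun x => by
  rw [LinearMap.smul_apply, inner_smul_left, RCLike.conj_ofReal, RCLike.re_ofReal_mul, mul_assoc]
  exact mul_le_mul_of_nonneg_left (hA x) hr

theorem adjoint_comp_comp {T : E →ₗ[𝕜] F} {S : F →ₗ[𝕜] E} {a : F →ₗ[𝕜] F} {τ : ℝ}
    (hST : ∀ y x, inner 𝕜 (S y) x = inner 𝕜 y (T x)) (hT : ∀ x, ‖T x‖ = τ * ‖x‖)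
    (ha : IsCoerciveWith c a) : IsCoerciveWith (c * τ ^ 2) (S ∘ₗ a ∘ₗ T) := fun x => by
  simpa only [LinearMap.comp_apply, hST, hT, mul_pow, mul_assoc] using ha (T x)

theorem mul_norm_le (hA : IsCoerciveWith c A) (x : E) : c * ‖x‖ ≤ ‖A x‖ := by
  rcases (norm_nonneg x).eq_or_lt with hx | hx
  · simp [← hx]
  · refine le_of_mul_le_mul_right ?_ hx
    calc c * ‖x‖ * ‖x‖ = c * ‖x‖ ^ 2 := by ring
      _ ≤ RCLike.re (inner 𝕜 (A x) x) := hA x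
      _ ≤ ‖A x‖ * ‖x‖ := re_inner_le_norm (A x) x

theorem norm_sub_le_of_apply_eq {δ : ℝ} {x y : E} (hc : 0 < c) (hδ : 0 ≤ δ)
    (hA : IsCoerciveWith c A) (hB : IsCoerciveWith c B)
    (hAB : ∀ z, ‖(B - A) z‖ ≤ δ * ‖z‖) (hxy : A x = B y) :
    ‖x - y‖ ≤ δ * ‖B y‖ / c ^ 2 := by
  have resolvent_identity : A (x - y) = (B - A) y := by
    rw [map_sub, hxy, LinearMap.sub_apply]
  rw [le_div_iff₀ (by positivity)]
  calc ‖x - y‖ * c ^ 2 = c * (c * ‖x - y‖) := by ring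
    _ ≤ c * (δ * ‖y‖) :=
      mul_le_mul_of_nonneg_left ((hA.mul_norm_le _).trans (resolvent_identity ▸ hAB y)) hc.le
    _ = δ * (c * ‖y‖) := by ring
    _ ≤ δ * ‖B y‖ := mul_le_mul_of_nonneg_left (hB.mul_norm_le y) hδ

end IsCoerciveWith

section FibreOperator

variable {T : E →ₗ[𝕜] F} {S : F →ₗ[𝕜] E} {τ : ℝ}

theorem norm_le_of_adjoint_of_norm_le (hτ : 0 ≤ τ)
    (hST : ∀ y x, inner 𝕜 (S y) x = inner 𝕜 y (T x)) (hT : ∀ x, ‖T x‖ ≤ τ * ‖x‖) (y : F) :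
    ‖S y‖ ≤ τ * ‖y‖ := by
  rcases (norm_nonneg (S y)).eq_or_lt with hy | hy
  · rw [← hy]
    positivity
  · refine le_of_mul_le_mul_right ?_ hy
    calc ‖S y‖ * ‖S y‖ = RCLike.re (inner 𝕜 y (T (S y))) := by
          rw [← hST, inner_self_eq_norm_mul_norm]
      _ ≤ ‖y‖ * ‖T (S y)‖ := re_inner_le_norm _ _
      _ ≤ ‖y‖ * (τ * ‖S y‖) := by gcongr; exact hT _
      _ = τ * ‖y‖ * ‖S y‖ := by ring

theorem isCoerciveWith_fibreOperator {ν : ℝ} {m : E →ₗ[𝕜] E} {a : F →ₗ[𝕜] F} (ε : ℝ)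
    (hST : ∀ y x, inner 𝕜 (S y) x = inner 𝕜 y (T x)) (hT : ∀ x, ‖T x‖ = τ * ‖x‖)
    (ha : IsCoerciveWith ν a) (hm : IsCoerciveWith ν m) :
    IsCoerciveWith (ν * (1 + (τ / ε) ^ 2)) (fibreOperator T S ε m a) := by
  convert ((ha.adjoint_comp_comp hST hT).ofReal_smul (sq_nonneg ε⁻¹)).add hm using 1
  · ring
  · simp only [fibreOperator, RCLike.ofReal_pow, RCLike.ofReal_inv]

theorem norm_fibreOperator_sub_apply_le {δ : ℝ} {a b : F →ₗ[𝕜] F} (ε : ℝ) (m : E →ₗ[𝕜] E)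
    (hτ : 0 ≤ τ) (hδ : 0 ≤ δ) (hST : ∀ y x, inner 𝕜 (S y) x = inner 𝕜 y (T x))
    (hT : ∀ x, ‖T x‖ ≤ τ * ‖x‖) (hab : ∀ X, ‖(b - a) X‖ ≤ δ * ‖X‖) (x : E) :
    ‖(fibreOperator T S ε m b - fibreOperator T S ε m a) x‖ ≤ δ * (τ / ε) ^ 2 * ‖x‖ := by
  have sub_apply_eq : (fibreOperator T S ε m b - fibreOperator T S ε m a) x =
      ((ε : 𝕜)⁻¹ ^ 2) • S ((b - a) (T x)) := by
    simp only [fibreOperator, LinearMap.sub_apply, LinearMap.smul_apply, LinearMap.comp_apply,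
      map_sub, smul_sub, add_sub_add_right_eq_sub]
  calc ‖(fibreOperator T S ε m b - fibreOperator T S ε m a) x‖
      = ε⁻¹ ^ 2 * ‖S ((b - a) (T x))‖ := by
        rw [sub_apply_eq, norm_smul, norm_pow, norm_inv, RCLike.norm_ofReal, inv_pow, sq_abs,
          inv_pow]
    _ ≤ ε⁻¹ ^ 2 * (τ * (δ * (τ * ‖x‖))) := by
        gcongr
        refine (norm_le_of_adjoint_of_norm_le hτ hST hT _).trans ?_
        gcongr
        refine (hab _).trans ?_
        gcongr
        exact hT x
    _ = δ * (τ / ε) ^ 2 * ‖x‖ := by ring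

end FibreOperator

theorem statement18_general {ν κ₀ τ ε : ℝ} (hν : 0 < ν) (hκ₀ : 0 ≤ κ₀) (hτ : 0 ≤ τ) (hε : 0 < ε)
    {T : E →ₗ[𝕜] F} {S : F →ₗ[𝕜] E} (hST : ∀ y x, inner 𝕜 (S y) x = inner 𝕜 y (T x))
    (hT : ∀ x, ‖T x‖ = τ * ‖x‖) {aθ a₀ : F →ₗ[𝕜] F} {m : E →ₗ[𝕜] E}
    (haθ : IsCoerciveWith ν aθ) (ha₀ : IsCoerciveWith ν a₀) (hm : IsCoerciveWith ν m)
    (hper : ∀ X, ‖(a₀ - aθ) X‖ ≤ κ₀ * τ * ‖X‖) {β β' f : E}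
    (heqθ : fibreOperator T S ε m aθ β = f) (heq₀ : fibreOperator T S ε m a₀ β' = f) :
    ‖β - β'‖
      ≤ (κ₀ * ⨆ t : Set.Ici (0 : ℝ), (t : ℝ) ^ 3 / (ν ^ 2 * (1 + (t : ℝ) ^ 2) ^ 2))
          * ε * ‖f‖ := by
  set t := τ / ε
  have ht_nonneg : 0 ≤ t := by positivity
  have hτ_eq : τ = t * ε := (div_mul_cancel₀ τ hε.ne').symm
  calc ‖β - β'‖
      ≤ κ₀ * τ * t ^ 2 * ‖fibreOperator T S ε m a₀ β'‖ / (ν * (1 + t ^ 2)) ^ 2 :=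
        IsCoerciveWith.norm_sub_le_of_apply_eq (by positivity) (by positivity)
          (isCoerciveWith_fibreOperator ε hST hT haθ hm)
          (isCoerciveWith_fibreOperator ε hST hT ha₀ hm)
          (norm_fibreOperator_sub_apply_le ε m hτ (by positivity) hST (fun x => (hT x).le) hper)
          (heqθ.trans heq₀.symm)
    _ = κ₀ * (t ^ 3 / (ν ^ 2 * (1 + t ^ 2) ^ 2)) * ε * ‖f‖ := by
        rw [heq₀, hτ_eq]
        ring
    _ ≤ _ := by
        gcongr
        exact le_ciSup (bddAbove_range_pow_three_div ν) ⟨t, ht_nonneg⟩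

end InnerProductSpace

section TensorVec

variable {n d : ℕ}

/-- The map `β ↦ β ⊗ θ` as a linear map, so that it can serve as the `T` of `fibreOperator`. -/
noncomputable def tensorVecₗ (n : ℕ) (θ : EuclideanSpace ℝ (Fin d)) :
    EuclideanSpace ℂ (Fin n) →ₗ[ℂ] EuclideanSpace ℂ (Fin n × Fin d) where
  toFun β := tensorVec β θ
  map_add' β γ := by ext p; simp [tensorVec, add_mul]
  map_smul' c β := by ext p; simp [tensorVec, mul_assoc]

/-- The map `M ↦ M θ` as a linear map, so that it can serve as the `S` of `fibreOperator`. -/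
noncomputable def matVecₗ (n : ℕ) (θ : EuclideanSpace ℝ (Fin d)) :
    EuclideanSpace ℂ (Fin n × Fin d) →ₗ[ℂ] EuclideanSpace ℂ (Fin n) where
  toFun M := matVec M θ
  map_add' M N := by ext i; simp [matVec, add_mul, Finset.sum_add_distrib]
  map_smul' c M := by ext i; simp [matVec, mul_assoc, Finset.mul_sum]

theorem inner_matVec_left (M : EuclideanSpace ℂ (Fin n × Fin d)) (θ : EuclideanSpace ℝ (Fin d))
    (β : EuclideanSpace ℂ (Fin n)) : inner ℂ (matVec M θ) β = inner ℂ M (tensorVec β θ) := by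
  simp only [matVec, tensorVec, PiLp.inner_apply, Fintype.sum_prod_type]
  refine Finset.sum_congr rfl fun i _ => ?_
  simp only [WithLp.equiv_symm_apply, RCLike.inner_apply, map_sum, map_mul, Complex.conj_ofReal,
    Finset.mul_sum]
  exact Finset.sum_congr rfl fun j _ => by ring

theorem norm_tensorVec (β : EuclideanSpace ℂ (Fin n)) (θ : EuclideanSpace ℝ (Fin d)) :
    ‖tensorVec β θ‖ = ‖θ‖ * ‖β‖ := by
  refine (pow_left_inj₀ (norm_nonneg _) (by positivity) two_ne_zero).1 ?_
  rw [mul_comm, mul_pow, EuclideanSpace.norm_sq_eq, EuclideanSpace.norm_sq_eq,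
    EuclideanSpace.norm_sq_eq, Finset.sum_mul_sum, Fintype.sum_prod_type]
  simp only [tensorVec, WithLp.equiv_symm_apply, norm_mul, Complex.norm_real, mul_pow]

end TensorVec

/-- **Stability of the limit fibre problem under perturbation of the
coefficient.**  Let `a_θ, a₀` be coercive linear maps on `ℂ^{n×d}` and `m` a coercive linear
map on `ℂⁿ`, all with constant `ν > 0`, and suppose `‖a₀ − a_θ‖ ≤ κ₀ |θ|`.  If
`ε⁻² a_θ(β ⊗ θ) θ + m β = f` and `ε⁻² a₀(β' ⊗ θ) θ + m β' = f`, then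
`‖β − β'‖ ≤ C ε ‖f‖` with `C = κ₀ · sup_{t ≥ 0} t³/(ν² (1 + t²)²)`. -/
theorem statement18
    (n d : ℕ) (hn : 1 ≤ n) (hd : 1 ≤ d)
    (ν : ℝ) (hν : 0 < ν) (κ₀ : ℝ) (hκ₀ : 0 ≤ κ₀)
    (aθ a₀ : EuclideanSpace ℂ (Fin n × Fin d) →L[ℂ] EuclideanSpace ℂ (Fin n × Fin d))
    (haθ : ∀ X : EuclideanSpace ℂ (Fin n × Fin d), ν * ‖X‖ ^ 2 ≤ (inner ℂ (aθ X) X : ℂ).re)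
    (ha₀ : ∀ X : EuclideanSpace ℂ (Fin n × Fin d), ν * ‖X‖ ^ 2 ≤ (inner ℂ (a₀ X) X : ℂ).re)
    (m : EuclideanSpace ℂ (Fin n) →L[ℂ] EuclideanSpace ℂ (Fin n))
    (hm : ∀ β : EuclideanSpace ℂ (Fin n), ν * ‖β‖ ^ 2 ≤ (inner ℂ (m β) β : ℂ).re)
    (θ : EuclideanSpace ℝ (Fin d)) (ε : ℝ) (hε : 0 < ε)
    (hper : ‖a₀ - aθ‖ ≤ κ₀ * ‖θ‖)
    (β β' f : EuclideanSpace ℂ (Fin n))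
    (heqθ : ((ε : ℂ)⁻¹ ^ 2) • matVec (aθ (tensorVec β θ)) θ + m β = f)
    (heq₀ : ((ε : ℂ)⁻¹ ^ 2) • matVec (a₀ (tensorVec β' θ)) θ + m β' = f) :
    ‖β - β'‖
      ≤ (κ₀ * ⨆ t : Set.Ici (0 : ℝ), (t : ℝ) ^ 3 / (ν ^ 2 * (1 + (t : ℝ) ^ 2) ^ 2))
          * ε * ‖f‖ :=
  statement18_general hν hκ₀ (norm_nonneg θ) hε (T := tensorVecₗ n θ) (S := matVecₗ n θ)
    (fun M x => inner_matVec_left M θ x) (fun x => norm_tensorVec x θ) (aθ := aθ) (a₀ := a₀)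
    (m := m) haθ ha₀ hm (fun X => (a₀ - aθ).le_of_opNorm_le hper X) heqθ heq₀
end
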